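/- Let α, β, μ, θ > 0 be real constants and L₁, L₂ > 0. Suppose u : ℝ × ℝ × ℝ → ℝ, (t,x,y) ↦ u(t,x,y), is infinitely differentiable, L₁-periodic in x and L₂-periodic in y, and satisfies the two-dimensional regularized long-wave equation ∂ₜu + α ∂ₓu + β ∂ᵧu + α u ∂ₓu + β u ∂ᵧu − μ ∂ₓₓₜu − θ ∂ᵧᵧₜu = 0 for all t, x, y. Then the Hamiltonian energy H(t) = ∫₀^{L₁} ∫₀^{L₂} ( ½ u² + (1/6) u³ ) dy dx is constant in t. -/

import Mathlib

open intervalIntegral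

/-!
Write `w = ∂ₜu`, `f = Φ'(u)` with `Φ r = r²/2 + r³/6`, and `A = 1 - μ ∂ₓₓ - θ ∂ᵧᵧ`, so that the
equation reads `A w = -∂ᵥ f` with `v = (α, β)`, while the energy has derivative `∫ f w` over the
period cell. Consider the correlations `C a = ∫ f z * w (z + a)` and `R a = ∫ f z * f (z + a)`.
Differentiating under the integral gives `A C = -∂ᵥ R`. Translating the cell shows that `R` is even,
hence `A C` is odd. Since `A` commutes with the reflection `a ↦ -a` and is injective on periodic
functions by the maximum principle, `C` is odd too, and `∫ f w = C 0 = 0`.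
-/

open Bornology Function MeasureTheory Module Set ZSpan
open scoped Pointwise Topology

section ParametricIntegral

variable {X P F : Type*} [MetricSpace X] [ProperSpace X] [MeasurableSpace X]
  [OpensMeasurableSpace X] {μ : Measure X} [IsFiniteMeasureOnCompacts μ] {s : Set X}
  [NormedAddCommGroup F]

theorem integrableOn_of_continuous_of_isBounded {g : X → F} (hg : Continuous g)
    (hs : IsBounded s) : IntegrableOn g s μ :=
  (hg.continuousOn.integrableOn_compact hs.isCompact_closure).mono_set subset_closure

variable [NormedSpace ℝ F] [NormedAddCommGroup P] [NormedSpace ℝ P] [ProperSpace P]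

theorem hasFDerivAt_setIntegral_of_isBounded (hs : IsBounded s) {G : P → X → F}
    {G' : P → X → P →L[ℝ] F} (hG : ∀ p, Continuous (G p)) (hG' : Continuous (uncurry G'))
    (hderiv : ∀ p x, HasFDerivAt (G · x) (G' p x) p) (p : P) :
    HasFDerivAt (fun q => ∫ x in s, G q x ∂μ) (∫ x in s, G' p x ∂μ) p := by
  obtain ⟨C, hC⟩ := ((isCompact_closedBall p 1).prod
    hs.isCompact_closure).exists_bound_of_continuousOn hG'.continuousOn
  refine hasFDerivAt_integral_of_dominated_of_fderiv_le (bound := fun _ => C)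
    (Metric.closedBall_mem_nhds p one_pos)
    (.of_forall fun q => (hG q).aestronglyMeasurable)
    (integrableOn_of_continuous_of_isBounded (hG p) hs)
    (hG'.uncurry_left p).aestronglyMeasurable ?_
    (integrableOn_of_continuous_of_isBounded continuous_const hs)
    (.of_forall fun x q _ => hderiv q x)
  exact ae_restrict_of_ae_restrict_of_subset subset_closure <|
    ae_restrict_of_forall_mem isClosed_closure.measurableSet fun x hx q hq => hC (q, x) ⟨hq, hx⟩

theorem hasDerivAt_setIntegral_of_isBounded (hs : IsBounded s) {G G' : ℝ → X → F}
    (hG : ∀ t, Continuous (G t)) (hG' : Continuous (uncurry G'))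
    (hderiv : ∀ t x, HasDerivAt (G · x) (G' t x) t) (t : ℝ) :
    HasDerivAt (fun r => ∫ x in s, G r x ∂μ) (∫ x in s, G' t x ∂μ) t := by
  have hspan : Continuous (uncurry fun t x => ContinuousLinearMap.toSpanSingleton ℝ (G' t x)) :=
    (ContinuousLinearMap.toSpanSingletonCLE (𝕜 := ℝ)).continuous.comp hG'
  have h := (hasFDerivAt_setIntegral_of_isBounded (μ := μ) hs hG hspan
    (fun t x => (hderiv t x).hasFDerivAt) t).hasDerivAt
  rw [ContinuousLinearMap.integral_apply
    (integrableOn_of_continuous_of_isBounded (hspan.uncurry_left t) hs)] at h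
  simpa only [ContinuousLinearMap.toSpanSingleton_apply, one_smul] using h

end ParametricIntegral

section Periodic

theorem periodic_of_mem_span_int {A α ι : Type*} [AddCommGroup A] {b : ι → A} {g : A → α}
    (hg : ∀ i, Periodic g (b i)) {p : A} (hp : p ∈ Submodule.span ℤ (range b)) :
    Periodic g p := by
  induction hp using Submodule.span_induction with
  | mem p hp => obtain ⟨i, rfl⟩ := hp; exact hg i
  | zero => exact periodic_with_period_zero g
  | add p q _ _ hp hq => exact hp.add_period hq
  | smul n p _ hp => exact hp.zsmul n

variable {V F ι : Type*} [NormedAddCommGroup V] [NormedSpace ℝ V] [Finite ι] {b : Basis ι ℝ V}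

theorem exists_forall_le_of_periodic {α : Type*} [LinearOrder α] [TopologicalSpace α]
    [ClosedIciTopology α] {φ : V → α} (hφ : Continuous φ) (hper : ∀ i, Periodic φ (b i)) :
    ∃ a, ∀ z, φ z ≤ φ a := by
  have := b.finiteDimensional_of_finite
  have : ProperSpace V := FiniteDimensional.proper_real V
  cases nonempty_fintype ι
  obtain ⟨a, -, ha⟩ := (fundamentalDomain_isBounded b).isCompact_closure.exists_isMaxOn
    ⟨fract b 0, subset_closure (fract_mem_fundamentalDomain b 0)⟩ hφ.continuousOn
  refine ⟨a, fun z => ?_⟩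
  calc
    φ z = φ (fract b z) := ((periodic_of_mem_span_int hper (floor b z).2).sub_eq z).symm
    _ ≤ φ a := ha (subset_closure (fract_mem_fundamentalDomain b z))

theorem setIntegral_fundamentalDomain_comp_add_right [MeasurableSpace V] [BorelSpace V]
    [NormedAddCommGroup F] [NormedSpace ℝ F] {μ : Measure V} [μ.IsAddLeftInvariant]
    {g : V → F} (hg : ∀ i, Periodic g (b i)) (a : V) :
    ∫ z in fundamentalDomain b, g (z + a) ∂μ = ∫ z in fundamentalDomain b, g z ∂μ := by
  have hD := ZSpan.isAddFundamentalDomain' b μ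
  have : Countable (Submodule.span ℤ (range b)).toAddSubgroup :=
    inferInstanceAs (Countable (Submodule.span ℤ (range b)))
  calc
    ∫ z in fundamentalDomain b, g (z + a) ∂μ = ∫ z in a +ᵥ fundamentalDomain b, g z ∂μ := by
      rw [← image_vadd, (measurePreserving_vadd a μ).setIntegral_image_emb
        (measurableEmbedding_const_vadd a)]
      simp only [vadd_eq_add, add_comm]
    _ = ∫ z in fundamentalDomain b, g z ∂μ :=
      (hD.vadd_of_comm a).setIntegral_eq hD fun p z => by
        rw [AddSubgroup.vadd_def, vadd_eq_add, add_comm]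
        exact periodic_of_mem_span_int hg p.2 z

end Periodic

section SecondDerivativeTest

theorem deriv_deriv_nonpos_of_isLocalMax {h : ℝ → ℝ} {x : ℝ} (hmax : IsLocalMax h x)
    (hcont : ContinuousAt h x) : deriv (deriv h) x ≤ 0 := by
  by_contra! hpos
  have hmin : IsLocalMin h x := isLocalMin_of_deriv_deriv_pos hpos hmax.deriv_eq_zero hcont
  have hconst : h =ᶠ[𝓝 x] fun _ => h x := by
    filter_upwards [hmin, hmax] with s hge hle using le_antisymm hle hge
  have hzero : deriv (deriv h) x = 0 := by simpa using hconst.deriv.deriv_eq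
  exact hpos.ne' hzero

variable {V F : Type*} [NormedAddCommGroup V] [NormedSpace ℝ V]
  [NormedAddCommGroup F] [NormedSpace ℝ F]

theorem deriv_comp_of_hasDerivAt_const {φ : V → F} {γ : ℝ → V} {e : V}
    (hφ : Differentiable ℝ φ) (hγ : ∀ s, HasDerivAt γ e s) :
    deriv (fun s => φ (γ s)) = fun s => fderiv ℝ φ (γ s) e :=
  funext fun s => ((hφ _).hasFDerivAt.comp_hasDerivAt s (hγ s)).deriv

theorem deriv_deriv_comp_of_hasDerivAt_const {φ : V → F} {γ : ℝ → V} {e : V}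
    (hφ : Differentiable ℝ φ) (hγ : ∀ s, HasDerivAt γ e s) {s : ℝ}
    (hφ' : DifferentiableAt ℝ (fderiv ℝ φ) (γ s)) :
    deriv (deriv fun r => φ (γ r)) s = fderiv ℝ (fderiv ℝ φ) (γ s) e e := by
  rw [deriv_comp_of_hasDerivAt_const hφ hγ]
  simpa using ((hφ'.hasFDerivAt.comp_hasDerivAt s (hγ s)).clm_apply (hasDerivAt_const s e)).deriv

theorem fderiv_fderiv_nonpos_of_isLocalMax {φ : V → ℝ} {a : V} (hmax : IsLocalMax φ a)
    (hφ : Differentiable ℝ φ) (hφ' : DifferentiableAt ℝ (fderiv ℝ φ) a) (e : V) :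
    fderiv ℝ (fderiv ℝ φ) a e e ≤ 0 := by
  have hline (s : ℝ) : HasDerivAt (fun r : ℝ => a + r • e) e s := by
    simpa using ((hasDerivAt_id s).smul_const e).const_add a
  have hline₀ : a + (0 : ℝ) • e = a := by rw [zero_smul, add_zero]
  have hmax₀ : IsLocalMax (fun s : ℝ => φ (a + s • e)) 0 :=
    IsLocalMax.comp_continuous (g := fun s : ℝ => a + s • e) (hline₀.symm ▸ hmax)
      (hline 0).continuousAt
  have hcont : Continuous fun s : ℝ => φ (a + s • e) := hφ.continuous.comp (by fun_prop)
  have h := deriv_deriv_nonpos_of_isLocalMax hmax₀ hcont.continuousAt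
  rwa [deriv_deriv_comp_of_hasDerivAt_const hφ hline (hline₀.symm ▸ hφ'), hline₀] at h

theorem fderiv_comp_neg (φ : V → F) (a : V) :
    fderiv ℝ (fun z => φ (-z)) a = -fderiv ℝ φ (-a) := by
  ext e
  exact (DFunLike.congr_fun ((ContinuousLinearEquiv.neg ℝ).comp_right_fderiv (f := φ) (x := a))
    e).trans (map_neg (fderiv ℝ φ (-a)) e)

theorem odd_fderiv_of_even {φ : V → F} (hφ : φ.Even) : (fderiv ℝ φ).Odd := fun a => by
  have h := fderiv_comp_neg φ a
  rw [funext hφ] at h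
  rw [h, neg_neg]

end SecondDerivativeTest

section RLWOperator

variable {V κ : Type*} [NormedAddCommGroup V] [NormedSpace ℝ V] [Fintype κ] {c : κ → ℝ}
  {e : κ → V} {φ ψ : V → ℝ}

/-- The elliptic operator `1 - ∑ k, c k ∂²_{e k}`, which regularized long-wave equations apply to
`∂ₜu`. Directional second derivatives are encoded by iterating the Fréchet derivative. -/
noncomputable def rlwOperator (c : κ → ℝ) (e : κ → V) (φ : V → ℝ) (z : V) : ℝ :=
  φ z - ∑ k, c k * fderiv ℝ (fderiv ℝ φ) z (e k) (e k)

theorem rlwOperator_comp_neg (z : V) :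
    rlwOperator c e (fun y => φ (-y)) z = rlwOperator c e φ (-z) := by
  have hfderiv : fderiv ℝ (fun y => φ (-y)) = fun y => -fderiv ℝ φ (-y) :=
    funext (fderiv_comp_neg φ)
  simp only [rlwOperator, hfderiv, fderiv_fun_neg, fderiv_comp_neg, neg_neg]

theorem rlwOperator_neg (z : V) : rlwOperator c e (fun y => -φ y) z = -rlwOperator c e φ z := by
  have hfderiv : fderiv ℝ (fun y => -φ y) = fun y => -fderiv ℝ φ y :=
    funext fun y => fderiv_fun_neg
  simp only [rlwOperator, hfderiv, fderiv_fun_neg, neg_apply, mul_neg, Finset.sum_neg_distrib]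
  ring

theorem rlwOperator_add (hφ : Differentiable ℝ φ) (hψ : Differentiable ℝ ψ)
    (hφ' : Differentiable ℝ (fderiv ℝ φ)) (hψ' : Differentiable ℝ (fderiv ℝ ψ)) (z : V) :
    rlwOperator c e (fun y => φ y + ψ y) z = rlwOperator c e φ z + rlwOperator c e ψ z := by
  have hfderiv : fderiv ℝ (fun y => φ y + ψ y) = fun y => fderiv ℝ φ y + fderiv ℝ ψ y :=
    funext fun y => fderiv_fun_add (hφ y) (hψ y)
  simp only [rlwOperator, hfderiv, fderiv_fun_add (hφ' z) (hψ' z), add_apply, mul_add,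
    Finset.sum_add_distrib]
  ring

variable {ι : Type*} [Finite ι] {b : Basis ι ℝ V}

theorem nonpos_of_rlwOperator_nonpos (hc : ∀ k, 0 ≤ c k) (hφ : Differentiable ℝ φ)
    (hφ' : Differentiable ℝ (fderiv ℝ φ)) (hper : ∀ i, Periodic φ (b i))
    (h : ∀ z, rlwOperator c e φ z ≤ 0) (z : V) : φ z ≤ 0 := by
  obtain ⟨a, ha⟩ := exists_forall_le_of_periodic hφ.continuous hper
  have hsecond (k : κ) : c k * fderiv ℝ (fderiv ℝ φ) a (e k) (e k) ≤ 0 :=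
    mul_nonpos_of_nonneg_of_nonpos (hc k)
      (fderiv_fderiv_nonpos_of_isLocalMax (.of_forall ha) hφ (hφ' a) (e k))
  calc
    φ z ≤ φ a := ha z
    _ ≤ ∑ k, c k * fderiv ℝ (fderiv ℝ φ) a (e k) (e k) := sub_nonpos.mp (h a)
    _ ≤ 0 := Finset.sum_nonpos fun k _ => hsecond k

theorem eq_zero_of_rlwOperator_eq_zero (hc : ∀ k, 0 ≤ c k) (hφ : Differentiable ℝ φ)
    (hφ' : Differentiable ℝ (fderiv ℝ φ)) (hper : ∀ i, Periodic φ (b i))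
    (h : ∀ z, rlwOperator c e φ z = 0) (z : V) : φ z = 0 := by
  have hfderiv : fderiv ℝ (fun y => -φ y) = fun y => -fderiv ℝ φ y :=
    funext fun y => fderiv_fun_neg
  have hneg : -φ z ≤ 0 := nonpos_of_rlwOperator_nonpos (φ := fun y => -φ y) (b := b) hc hφ.fun_neg
    (hfderiv ▸ hφ'.fun_neg) (fun i y => congrArg Neg.neg (hper i y))
    (fun y => by rw [rlwOperator_neg, h, neg_zero]) z
  exact le_antisymm (nonpos_of_rlwOperator_nonpos hc hφ hφ' hper (fun y => (h y).le) z)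
    (neg_nonpos.mp hneg)

theorem odd_of_odd_rlwOperator (hc : ∀ k, 0 ≤ c k) (hφ : Differentiable ℝ φ)
    (hφ' : Differentiable ℝ (fderiv ℝ φ)) (hper : ∀ i, Periodic φ (b i))
    (h : (rlwOperator c e φ).Odd) : φ.Odd := by
  have hreflect : Differentiable ℝ fun a => φ (-a) := hφ.comp differentiable_id.fun_neg
  have hreflect' : Differentiable ℝ (fderiv ℝ fun a => φ (-a)) := by
    rw [funext (fderiv_comp_neg φ)]
    exact (hφ'.comp differentiable_id.fun_neg).fun_neg
  have hsum' : Differentiable ℝ (fderiv ℝ fun a => φ (-a) + φ a) := by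
    have hfderiv : (fderiv ℝ fun a => φ (-a) + φ a) =
        fun a => fderiv ℝ (fun y => φ (-y)) a + fderiv ℝ φ a :=
      funext fun a => fderiv_fun_add (hreflect a) (hφ a)
    exact hfderiv ▸ hreflect'.fun_add hφ'
  have hsumper (i : ι) : Periodic (fun a => φ (-a) + φ a) (b i) := fun a => by
    simp only [hper i a, neg_add', (hper i).sub_eq]
  have hsum (z : V) : rlwOperator c e (fun a => φ (-a) + φ a) z = 0 := by
    rw [rlwOperator_add hreflect hφ hreflect' hφ', rlwOperator_comp_neg, h z, neg_add_cancel]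
  exact fun z => eq_neg_of_add_eq_zero_left <|
    eq_zero_of_rlwOperator_eq_zero hc (hreflect.fun_add hφ) hsum' hsumper hsum z

end RLWOperator

section CrossCorrelation

variable {V F : Type*} [NormedAddCommGroup V] [MeasurableSpace V]
  [NormedAddCommGroup F] [NormedSpace ℝ F] {μ : Measure V} {s : Set V} {f : V → ℝ} {g : V → F}

/-- The cross-correlation `a ↦ ∫ z in s, f z • g (z + a) ∂μ` over a period cell `s`. The second
factor may be vector-valued, so that derivatives of a correlation are again correlations. -/
noncomputable def crossCorrelation (μ : Measure V) (s : Set V) (f : V → ℝ) (g : V → F) (a : V) :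
    F :=
  ∫ z in s, f z • g (z + a) ∂μ

theorem periodic_crossCorrelation {p : V} (hg : Periodic g p) :
    Periodic (crossCorrelation μ s f g) p := fun a => by
  simp only [crossCorrelation, ← add_assoc, hg _]

variable [NormedSpace ℝ V]

theorem even_crossCorrelation_self {ι : Type*} [Finite ι] {b : Basis ι ℝ V} [BorelSpace V]
    [μ.IsAddLeftInvariant] (hf : ∀ i, Periodic f (b i)) :
    (crossCorrelation μ (fundamentalDomain b) f f).Even := fun a => by
  have hper (i : ι) : Periodic (fun z => f z * f (z + -a)) (b i) :=
    (hf i).mul ((hf i).add_const (-a))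
  simp only [crossCorrelation, smul_eq_mul]
  rw [← setIntegral_fundamentalDomain_comp_add_right hper a]
  simp only [add_neg_cancel_right, mul_comm]

variable [BorelSpace V] [FiniteDimensional ℝ V] [IsFiniteMeasureOnCompacts μ]

theorem integrableOn_smul_comp_add_right (hs : IsBounded s) (hf : Continuous f)
    (hg : Continuous g) (a : V) : IntegrableOn (fun z => f z • g (z + a)) s μ :=
  have : ProperSpace V := FiniteDimensional.proper_real V
  integrableOn_of_continuous_of_isBounded (by fun_prop) hs

theorem hasFDerivAt_crossCorrelation (hs : IsBounded s) (hf : Continuous f) (hg : ContDiff ℝ 1 g)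
    (a : V) :
    HasFDerivAt (crossCorrelation μ s f g) (crossCorrelation μ s f (fderiv ℝ g) a) a := by
  have : ProperSpace V := FiniteDimensional.proper_real V
  have hg₀ := hg.continuous
  have hg₁ : Continuous (fderiv ℝ g) := hg.continuous_fderiv one_ne_zero
  refine hasFDerivAt_setIntegral_of_isBounded hs
    (G := fun a z => f z • g (z + a)) (G' := fun a z => f z • fderiv ℝ g (z + a))
    (fun a => by fun_prop) ?_ (fun a z => ?_) a
  · exact (hf.comp continuous_snd).smul (hg₁.comp (continuous_snd.add continuous_fst))
  · exact ((hasFDerivAt_comp_add_left z).mpr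
      (hg.differentiable one_ne_zero _).hasFDerivAt).const_smul (f z)

theorem fderiv_crossCorrelation (hs : IsBounded s) (hf : Continuous f) (hg : ContDiff ℝ 1 g) :
    fderiv ℝ (crossCorrelation μ s f g) = crossCorrelation μ s f (fderiv ℝ g) :=
  funext fun a => (hasFDerivAt_crossCorrelation hs hf hg a).fderiv

theorem crossCorrelation_clm_apply (hs : IsBounded s) (hf : Continuous f) {T : V → V →L[ℝ] F}
    (hT : Continuous T) (a e : V) :
    crossCorrelation μ s f T a e = crossCorrelation μ s f (fun z => T z e) a :=
  ContinuousLinearMap.integral_apply (integrableOn_smul_comp_add_right hs hf hT a) e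

theorem rlwOperator_crossCorrelation {κ : Type*} [Fintype κ] (c : κ → ℝ) (e : κ → V)
    (hs : IsBounded s) (hf : Continuous f) {w : V → ℝ} (hw : ContDiff ℝ 2 w) (a : V) :
    rlwOperator c e (crossCorrelation μ s f w) a =
      crossCorrelation μ s f (rlwOperator c e w) a := by
  have hw₁ : ContDiff ℝ 1 (fderiv ℝ w) := hw.fderiv_right (by norm_num)
  have hw₂ : Continuous (fderiv ℝ (fderiv ℝ w)) := hw₁.continuous_fderiv one_ne_zero
  have hw₂e (k : κ) : Continuous fun z => fderiv ℝ (fderiv ℝ w) z (e k) (e k) := by fun_prop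
  have hint₀ : IntegrableOn (fun z => f z * w (z + a)) s μ :=
    integrableOn_smul_comp_add_right hs hf hw.continuous a
  have hint (k : κ) : IntegrableOn
      (fun z => c k * (f z * fderiv ℝ (fderiv ℝ w) (z + a) (e k) (e k))) s μ :=
    (integrableOn_smul_comp_add_right hs hf (hw₂e k) a).const_mul (c k)
  rw [rlwOperator, fderiv_crossCorrelation hs hf (hw.of_le one_le_two),
    fderiv_crossCorrelation hs hf hw₁]
  simp only [crossCorrelation_clm_apply hs hf hw₂,
    crossCorrelation_clm_apply hs hf (hw₂.clm_apply continuous_const)]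
  simp only [crossCorrelation, rlwOperator, smul_eq_mul, ← MeasureTheory.integral_const_mul]
  rw [← MeasureTheory.integral_finsetSum _ fun k _ => hint k, ← MeasureTheory.integral_sub
    hint₀ (integrable_finsetSum _ fun k _ => hint k)]
  simp only [mul_sub, Finset.mul_sum, mul_left_comm]

end CrossCorrelation

section TimeDerivative

variable {V F : Type*} [NormedAddCommGroup V] [NormedSpace ℝ V] [NormedAddCommGroup F]
  [NormedSpace ℝ F] {n : WithTop ℕ∞} {g : ℝ → V → F}

theorem hasDerivAt_of_contDiff_uncurry (hg : ContDiff ℝ 1 (uncurry g)) (t : ℝ) (z : V) :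
    HasDerivAt (g · z) (deriv (g · z) t) t :=
  ((hg.comp (contDiff_prodMk_left z)).differentiable one_ne_zero t).hasDerivAt

theorem contDiff_uncurry_deriv (hg : ContDiff ℝ (n + 1) (uncurry g)) :
    ContDiff ℝ n (uncurry fun t z => deriv (g · z) t) := by
  have hswap : ContDiff ℝ (n + 1) (uncurry fun (p : ℝ × V) s => g s p.2) :=
    hg.comp (contDiff_snd.prodMk (contDiff_snd.comp contDiff_fst))
  exact (hswap.fderiv_succ contDiff_fst).clm_apply contDiff_const

theorem contDiff_uncurry_fderiv (hg : ContDiff ℝ (n + 1) (uncurry g)) :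
    ContDiff ℝ n (uncurry fun t z => fderiv ℝ (g t) z) := by
  have hfst : ContDiff ℝ (n + 1) (uncurry fun (p : ℝ × V) z => g p.1 z) :=
    hg.comp ((contDiff_fst.comp contDiff_fst).prodMk contDiff_snd)
  exact hfst.fderiv_succ contDiff_snd

theorem deriv_fderiv_comm (hg : ContDiff ℝ 2 (uncurry g)) (t : ℝ) (z : V) :
    deriv (fun s => fderiv ℝ (g s) z) t = fderiv ℝ (fun y => deriv (g · y) t) z := by
  let D := fderiv ℝ (uncurry g)
  have hg₁ (s : ℝ) (y : V) : HasFDerivAt (uncurry g) (D (s, y)) (s, y) :=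
    (hg.differentiable two_ne_zero (s, y)).hasFDerivAt
  have hD : HasFDerivAt D (fderiv ℝ D (t, z)) (t, z) :=
    ((hg.fderiv_right (m := 1) (by norm_num)).differentiable one_ne_zero (t, z)).hasFDerivAt
  have htime (s : ℝ) (y : V) : HasFDerivAt (g · y) ((D (s, y)).comp (.inl ℝ ℝ V)) s :=
    (hg₁ s y).comp (f := fun r => (r, y)) s (hasFDerivAt_prodMk_left s y)
  have hspace (s : ℝ) (y : V) : HasFDerivAt (g s) ((D (s, y)).comp (.inr ℝ ℝ V)) y :=
    (hg₁ s y).comp y (hasFDerivAt_prodMk_right s y)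
  have hL : HasFDerivAt (fun s => D (s, z)) ((fderiv ℝ D (t, z)).comp (.inl ℝ ℝ V)) t :=
    hD.comp t (hasFDerivAt_prodMk_left t z)
  have hR : HasFDerivAt (fun y => D (t, y)) ((fderiv ℝ D (t, z)).comp (.inr ℝ ℝ V)) z :=
    hD.comp z (hasFDerivAt_prodMk_right t z)
  have hLinr := hL.hasDerivAt.clm_comp (hasDerivAt_const t (ContinuousLinearMap.inr ℝ ℝ V))
  have hRinl := hR.clm_apply (hasFDerivAt_const ((1 : ℝ), (0 : V)) z)
  simp only [(hspace _ _).fderiv, (htime _ _).hasDerivAt.deriv]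
  rw [hLinr.deriv]
  refine .trans ?_ hRinl.fderiv.symm
  ext e
  simpa using hg.contDiffAt.isSymmSndFDerivAt (by simp) (1, 0) (0, e)

theorem deriv_fderiv_fderiv_apply_comm (hg : ContDiff ℝ 3 (uncurry g)) (t : ℝ) (z e₁ e₂ : V) :
    deriv (fun s => fderiv ℝ (fderiv ℝ (g s)) z e₁ e₂) t =
      fderiv ℝ (fderiv ℝ fun y => deriv (g · y) t) z e₁ e₂ := by
  have hg' : ContDiff ℝ 2 (uncurry fun s y => fderiv ℝ (g s) y) := contDiff_uncurry_fderiv hg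
  have hg'' : ContDiff ℝ 1 (uncurry fun s y => fderiv ℝ (fderiv ℝ (g s)) y) :=
    contDiff_uncurry_fderiv hg'
  have happly := ((hasDerivAt_of_contDiff_uncurry hg'' t z).clm_apply
    (hasDerivAt_const t e₁)).clm_apply (hasDerivAt_const t e₂)
  simp only [map_zero, add_zero] at happly
  rw [happly.deriv, deriv_fderiv_comm hg' t z,
    funext (deriv_fderiv_comm (hg.of_le (by norm_num)) t)]

theorem deriv_deriv_deriv_comp_of_hasDerivAt_const (hg : ContDiff ℝ 3 (uncurry g)) {γ : ℝ → V}
    {e : V} (hγ : ∀ s, HasDerivAt γ e s) (t x : ℝ) :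
    deriv (fun s => deriv (deriv fun r => g s (γ r)) x) t =
      fderiv ℝ (fderiv ℝ fun z => deriv (g · z) t) (γ x) e e := by
  have hslice (s : ℝ) : ContDiff ℝ 3 (g s) := hg.comp (contDiff_prodMk_right s)
  have hslice' (s : ℝ) : ContDiff ℝ 2 (fderiv ℝ (g s)) := (hslice s).fderiv_right (by norm_num)
  simp only [fun s => deriv_deriv_comp_of_hasDerivAt_const
    ((hslice s).differentiable three_ne_zero) hγ ((hslice' s).differentiable two_ne_zero (γ x))]
  exact deriv_fderiv_fderiv_apply_comm hg t (γ x) e e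

end TimeDerivative

section EnergyConservation

variable {V ι κ : Type*} [NormedAddCommGroup V] [NormedSpace ℝ V] [MeasurableSpace V]
  [BorelSpace V] [Finite ι] [Fintype κ] {b : Basis ι ℝ V} {μ : Measure V}
  [μ.IsAddLeftInvariant] [IsFiniteMeasureOnCompacts μ] {c : κ → ℝ} {e : κ → V} {v : V}

theorem setIntegral_mul_eq_zero_of_rlwOperator_eq (hc : ∀ k, 0 ≤ c k) {f w : V → ℝ}
    (hf : ContDiff ℝ 1 f) (hw : ContDiff ℝ 2 w) (hfper : ∀ i, Periodic f (b i))
    (hwper : ∀ i, Periodic w (b i)) (h : ∀ z, rlwOperator c e w z = -fderiv ℝ f z v) :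
    ∫ z in fundamentalDomain b, f z * w z ∂μ = 0 := by
  have := b.finiteDimensional_of_finite
  have hbdd := fundamentalDomain_isBounded b
  have hfc := hf.continuous
  have hw₁ : ContDiff ℝ 1 (fderiv ℝ w) := hw.fderiv_right (by norm_num)
  let R := crossCorrelation μ (fundamentalDomain b) f f
  let C := crossCorrelation μ (fundamentalDomain b) f w
  have hC : Differentiable ℝ C := fun a =>
    (hasFDerivAt_crossCorrelation hbdd hfc (hw.of_le one_le_two) a).differentiableAt
  have hC' : Differentiable ℝ (fderiv ℝ C) := by
    rw [fderiv_crossCorrelation hbdd hfc (hw.of_le one_le_two)]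
    exact fun a => (hasFDerivAt_crossCorrelation hbdd hfc hw₁ a).differentiableAt
  have hCR (a : V) : rlwOperator c e C a = -fderiv ℝ R a v := by
    rw [rlwOperator_crossCorrelation c e hbdd hfc hw, fderiv_crossCorrelation hbdd hfc hf,
      crossCorrelation_clm_apply hbdd hfc (hf.continuous_fderiv one_ne_zero)]
    simp only [crossCorrelation, h, smul_eq_mul, mul_neg, MeasureTheory.integral_neg]
  have hAC : (rlwOperator c e C).Odd := fun a => by
    rw [hCR, hCR, odd_fderiv_of_even (even_crossCorrelation_self hfper), neg_apply]
  have hCodd : C.Odd := odd_of_odd_rlwOperator hc hC hC'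
    (fun i => periodic_crossCorrelation (hwper i)) hAC
  simpa only [C, crossCorrelation, add_zero, smul_eq_mul] using hCodd.map_zero

theorem setIntegral_energy_eq_of_rlwOperator_eq (hc : ∀ k, 0 ≤ c k) {Φ : ℝ → ℝ}
    (hΦ : ContDiff ℝ 2 Φ) {u : ℝ → V → ℝ} (hu : ContDiff ℝ 1 (uncurry u))
    (hut : ∀ t, ContDiff ℝ 2 fun z => deriv (u · z) t) (hper : ∀ t i, Periodic (u t) (b i))
    (hpde : ∀ t z, rlwOperator c e (fun z => deriv (u · z) t) z =
      -fderiv ℝ (fun z => deriv Φ (u t z)) z v) (t₁ t₂ : ℝ) :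
    ∫ z in fundamentalDomain b, Φ (u t₁ z) ∂μ = ∫ z in fundamentalDomain b, Φ (u t₂ z) ∂μ := by
  have := b.finiteDimensional_of_finite
  have : ProperSpace V := FiniteDimensional.proper_real V
  have huC (t : ℝ) : ContDiff ℝ 1 (u t) := hu.comp (contDiff_prodMk_right t)
  have hderiv (t : ℝ) (z : V) :
      HasDerivAt (fun s => Φ (u s z)) (deriv Φ (u t z) * deriv (u · z) t) t :=
    (hΦ.differentiable two_ne_zero _).hasDerivAt.comp t (hasDerivAt_of_contDiff_uncurry hu t z)
  have hcont : Continuous (uncurry fun t z => deriv Φ (u t z) * deriv (u · z) t) :=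
    ((hΦ.continuous_deriv one_le_two).comp hu.continuous).mul
      (contDiff_uncurry_deriv (n := 0) hu).continuous
  have henergy (t : ℝ) : HasDerivAt (fun s => ∫ z in fundamentalDomain b, Φ (u s z) ∂μ) 0 t := by
    have hvanish : ∫ z in fundamentalDomain b, deriv Φ (u t z) * deriv (u · z) t ∂μ = 0 :=
      setIntegral_mul_eq_zero_of_rlwOperator_eq hc (hΦ.deriv'.comp (huC t)) (hut t)
        (fun i => (hper t i).comp (deriv Φ))
        (fun i z => by simp only [hper _ i z]) (hpde t)
    rw [← hvanish]
    exact hasDerivAt_setIntegral_of_isBounded (fundamentalDomain_isBounded b)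
      (fun s => hΦ.continuous.comp (huC s).continuous) hcont hderiv t
  exact is_const_of_deriv_eq_zero (fun t => (henergy t).differentiableAt)
    (fun t => (henergy t).deriv) t₁ t₂

end EnergyConservation

section Rectangle

/-- The basis of `ℝ × ℝ` whose fundamental domain is the rectangle of side lengths `l₁` and `l₂`
based at the origin. Units exclude degenerate sides. -/
noncomputable def rectangleBasis (l₁ l₂ : ℝˣ) : Basis (Fin 2) ℝ (ℝ × ℝ) :=
  (Basis.finTwoProd ℝ).unitsSMul ![l₁, l₂]

theorem fundamentalDomain_rectangleBasis {l₁ l₂ : ℝˣ} (h₁ : 0 < (l₁ : ℝ)) (h₂ : 0 < (l₂ : ℝ)) :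
    fundamentalDomain (rectangleBasis l₁ l₂) = Ico 0 (l₁ : ℝ) ×ˢ Ico 0 (l₂ : ℝ) := by
  ext z
  simp [mem_fundamentalDomain, rectangleBasis, Fin.forall_fin_two, Basis.repr_unitsSMul,
    Units.smul_def, ← div_eq_inv_mul, div_lt_one, le_div_iff₀, h₁, h₂]

theorem setIntegral_Ico_prod_Ico {F : Type*} [NormedAddCommGroup F] [NormedSpace ℝ F]
    {a₁ b₁ a₂ b₂ : ℝ} (h₁ : a₁ ≤ b₁) (h₂ : a₂ ≤ b₂) {g : ℝ × ℝ → F} (hg : Continuous g) :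
    ∫ z in Ico a₁ b₁ ×ˢ Ico a₂ b₂, g z = ∫ x in a₁..b₁, ∫ y in a₂..b₂, g (x, y) := by
  simp only [intervalIntegral.integral_of_le, h₁, h₂, ← integral_Ico_eq_integral_Ioc]
  exact setIntegral_prod g (integrableOn_of_continuous_of_isBounded hg
    ((Metric.isBounded_Ico a₁ b₁).prod (Metric.isBounded_Ico a₂ b₂)))

end Rectangle

section Plane

theorem fderiv_apply_prodMk {F : Type*} [NormedAddCommGroup F] [NormedSpace ℝ F] {φ : ℝ × ℝ → F}
    (hφ : Differentiable ℝ φ) (x y α β : ℝ) :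
    fderiv ℝ φ (x, y) (α, β) =
      α • deriv (fun a => φ (a, y)) x + β • deriv (fun b => φ (x, b)) y := by
  rw [deriv_comp_of_hasDerivAt_const hφ fun s => (hasDerivAt_id' s).prodMk (hasDerivAt_const s y),
    deriv_comp_of_hasDerivAt_const hφ fun s => (hasDerivAt_const s x).prodMk (hasDerivAt_id' s),
    ← map_smul, ← map_smul, ← map_add]
  simp

theorem rlwOperator_deriv_prodMk {u : ℝ → ℝ × ℝ → ℝ} (hu : ContDiff ℝ 3 (uncurry u))
    (μ θ t x y : ℝ) :
    rlwOperator ![μ, θ] ![(1, 0), (0, 1)] (fun z => deriv (u · z) t) (x, y) =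
      deriv (u · (x, y)) t
        - μ * deriv (fun s => deriv (deriv fun a => u s (a, y)) x) t
        - θ * deriv (fun s => deriv (deriv fun b => u s (x, b)) y) t := by
  rw [deriv_deriv_deriv_comp_of_hasDerivAt_const hu
      (fun s => (hasDerivAt_id' s).prodMk (hasDerivAt_const s y)) t x,
    deriv_deriv_deriv_comp_of_hasDerivAt_const hu
      (fun s => (hasDerivAt_const s x).prodMk (hasDerivAt_id' s)) t y]
  simp [rlwOperator, Fin.sum_univ_two, sub_sub]

end Plane

section EnergyDensity

/-- The energy density `r²/2 + r³/6`, whose derivative `r + r²/2` is the flux of the regularized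
long-wave equation. -/
noncomputable def rlwEnergyDensity (r : ℝ) : ℝ :=
  (1 / 2) * r ^ 2 + (1 / 6) * r ^ 3

theorem contDiff_rlwEnergyDensity {n : WithTop ℕ∞} : ContDiff ℝ n rlwEnergyDensity := by
  unfold rlwEnergyDensity
  fun_prop

theorem deriv_rlwEnergyDensity : deriv rlwEnergyDensity = fun r => r + r ^ 2 / 2 := by
  ext r
  have h := ((hasDerivAt_pow 2 r).const_mul (1 / 2 : ℝ)).fun_add
    ((hasDerivAt_pow 3 r).const_mul (1 / 6 : ℝ))
  calc
    deriv rlwEnergyDensity r = 1 / 2 * ((2 : ℕ) * r ^ (2 - 1)) + 1 / 6 * ((3 : ℕ) * r ^ (3 - 1)) :=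
      h.deriv
    _ = r + r ^ 2 / 2 := by norm_num; ring

theorem fderiv_deriv_rlwEnergyDensity_comp {V : Type*} [NormedAddCommGroup V] [NormedSpace ℝ V]
    {φ : V → ℝ} {z : V} (hφ : DifferentiableAt ℝ φ z) (v : V) :
    fderiv ℝ (fun y => deriv rlwEnergyDensity (φ y)) z v = (1 + φ z) * fderiv ℝ φ z v := by
  have hflux : HasDerivAt (deriv rlwEnergyDensity) (1 + φ z) (φ z) := by
    rw [deriv_rlwEnergyDensity]
    simpa using (hasDerivAt_id' (φ z)).fun_add ((hasDerivAt_pow 2 (φ z)).div_const 2)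
  exact DFunLike.congr_fun (hflux.comp_hasFDerivAt z hφ.hasFDerivAt).fderiv v

end EnergyDensity

theorem rlw2d_energy_conservation_general
    {α β μ θ L₁ L₂ : ℝ} (hμ : 0 ≤ μ) (hθ : 0 ≤ θ) (hL₁ : 0 < L₁) (hL₂ : 0 < L₂)
    {u : ℝ → ℝ → ℝ → ℝ}
    (hsmooth : ContDiff ℝ 3 (fun p : ℝ × ℝ × ℝ => u p.1 p.2.1 p.2.2))
    (hperx : ∀ t x y, u t (x + L₁) y = u t x y)
    (hpery : ∀ t x y, u t x (y + L₂) = u t x y)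
    (hpde : ∀ t x y,
      deriv (fun s => u s x y) t
        + α * deriv (fun a => u t a y) x
        + β * deriv (fun b => u t x b) y
        + α * u t x y * deriv (fun a => u t a y) x
        + β * u t x y * deriv (fun b => u t x b) y
        - μ * deriv (fun s => deriv (fun a => deriv (fun a' => u s a' y) a) x) t
        - θ * deriv (fun s => deriv (fun b => deriv (fun b' => u s x b') b) y) t = 0)
    (t₁ t₂ : ℝ) :
    (∫ x in (0:ℝ)..L₁, ∫ y in (0:ℝ)..L₂, ((1/2) * (u t₁ x y)^2 + (1/6) * (u t₁ x y)^3))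
      = ∫ x in (0:ℝ)..L₁, ∫ y in (0:ℝ)..L₂,
        ((1/2) * (u t₂ x y)^2 + (1/6) * (u t₂ x y)^3) := by
  let U (t : ℝ) (z : ℝ × ℝ) : ℝ := u t z.1 z.2
  let b := rectangleBasis (.mk0 L₁ hL₁.ne') (.mk0 L₂ hL₂.ne')
  have hU : ContDiff ℝ 3 (uncurry U) := hsmooth
  have hUt (t : ℝ) : ContDiff ℝ 3 (U t) := hU.comp (contDiff_prodMk_right t)
  have hper (t : ℝ) (i : Fin 2) : Periodic (U t) (b i) := by
    intro z
    fin_cases i <;> simp [b, U, rectangleBasis, Basis.unitsSMul_apply, Units.smul_def, hperx, hpery]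
  have hrlw (t : ℝ) (z : ℝ × ℝ) :
      rlwOperator ![μ, θ] ![(1, 0), (0, 1)] (fun z => deriv (U · z) t) z =
        -fderiv ℝ (fun z => deriv rlwEnergyDensity (U t z)) z (α, β) := by
    have hdiff := (hUt t).differentiable three_ne_zero
    rw [rlwOperator_deriv_prodMk hU, fderiv_deriv_rlwEnergyDensity_comp (hdiff z),
      fderiv_apply_prodMk hdiff, smul_eq_mul, smul_eq_mul]
    linear_combination hpde t z.1 z.2
  have henergy (t : ℝ) : ∫ z in fundamentalDomain b, rlwEnergyDensity (U t z) =
      ∫ x in (0 : ℝ)..L₁, ∫ y in (0 : ℝ)..L₂, rlwEnergyDensity (u t x y) := by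
    rw [fundamentalDomain_rectangleBasis hL₁ hL₂]
    exact setIntegral_Ico_prod_Ico hL₁.le hL₂.le
      ((contDiff_rlwEnergyDensity (n := 0)).continuous.comp (hUt t).continuous)
  have hconserved := setIntegral_energy_eq_of_rlwOperator_eq (μ := volume)
    (Fin.forall_fin_two.mpr ⟨hμ, hθ⟩) contDiff_rlwEnergyDensity (hU.of_le (by norm_num))
    (fun t => (contDiff_uncurry_deriv hU).comp (contDiff_prodMk_right t)) hper hrlw t₁ t₂
  rwa [henergy, henergy] at hconserved

/-- Hamiltonian energy conservation for the 2D regularized long-wave equation. -/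
theorem rlw2d_energy_conservation
    (α β μ θ L₁ L₂ : ℝ) (hα : 0 < α) (hβ : 0 < β) (hμ : 0 < μ) (hθ : 0 < θ)
    (hL₁ : 0 < L₁) (hL₂ : 0 < L₂)
    (u : ℝ → ℝ → ℝ → ℝ)
    (hsmooth : ContDiff ℝ (⊤ : ℕ∞) (fun p : ℝ × ℝ × ℝ => u p.1 p.2.1 p.2.2))
    (hperx : ∀ t x y, u t (x + L₁) y = u t x y)
    (hpery : ∀ t x y, u t x (y + L₂) = u t x y)
    (hpde : ∀ t x y,
      deriv (fun s => u s x y) t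
        + α * deriv (fun a => u t a y) x
        + β * deriv (fun b => u t x b) y
        + α * u t x y * deriv (fun a => u t a y) x
        + β * u t x y * deriv (fun b => u t x b) y
        - μ * deriv (fun s => deriv (fun a => deriv (fun a' => u s a' y) a) x) t
        - θ * deriv (fun s => deriv (fun b => deriv (fun b' => u s x b') b) y) t = 0) :
    ∀ t₁ t₂ : ℝ,
      (∫ x in (0:ℝ)..L₁, ∫ y in (0:ℝ)..L₂,
        ((1/2) * (u t₁ x y)^2 + (1/6) * (u t₁ x y)^3))
      = ∫ x in (0:ℝ)..L₁, ∫ y in (0:ℝ)..L₂,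
        ((1/2) * (u t₂ x y)^2 + (1/6) * (u t₂ x y)^3) :=
  rlw2d_energy_conservation_general hμ.le hθ.le hL₁ hL₂
    (mod_cast contDiff_infty.mp hsmooth 3) hperx hpery hpde
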